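/- Let X be a separable real Banach space and h : X → ℝ a convex, globally Lipschitz continuous function. Suppose the set Y := { x ∈ X : h has a unique Fenchel subgradient dh_x ∈ X* at x } is dense in X. Then, for every x ∈ X, the Fenchel subdifferential ∂h(x) is the weak*-closed convex hull of the set Z_x, where Z_x is the set of all x* ∈ X* such that there exists a net {x_i}_{i∈I} in Y converging to x with the unique Fenchel subgradients dh_{x_i} ∈ X* converging to x* in the weak*-topology. -/

import Mathlib

open Filter Topology

/-- `φ ∈ X*` is a Fenchel subgradient of `h : X → ℝ` at `x` iff
`h(x + x') ≥ h(x) + φ(x')` for all `x' ∈ X`. -/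
def IsFenchelSubgradient {X : Type*} [NormedAddCommGroup X] [NormedSpace ℝ X]
    (h : X → ℝ) (x : X) (φ : WeakDual ℝ X) : Prop :=
  ∀ x' : X, h x + φ x' ≤ h (x + x')

/-- The set `Z_x` of weak*-limits `φ` of the (unique) Fenchel subgradients along nets
(formalized via filters on pairs) of points of the differentiability set `Y` converging
to `x`. -/
def limitSubgradients {X : Type*} [NormedAddCommGroup X] [NormedSpace ℝ X]
    (h : X → ℝ) (x : X) : Set (WeakDual ℝ X) :=
  {φ : WeakDual ℝ X |
    ∃ F : Filter (X × WeakDual ℝ X), F.NeBot ∧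
      (∀ᶠ p in F, (∃! ψ : WeakDual ℝ X, IsFenchelSubgradient h p.1 ψ) ∧
        IsFenchelSubgradient h p.1 p.2) ∧
      Filter.Tendsto Prod.fst F (nhds x) ∧ Filter.Tendsto Prod.snd F (nhds φ)}

/-!
Weak*-limits of subgradients along points converging to `x` are subgradients at `x`, so `∂h(x)`
contains the closed convex hull of `Z_x`. For the converse, Hahn–Banach reduces the claim to
finding, for each `φ ∈ ∂h(x)` and each direction `v`, some `ψ ∈ Z_x` with `φ v ≤ ψ v`. Approach `x`
through points `x + t w ∈ Y` with `t ↓ 0` and `w → v`: monotonicity of the subdifferential gives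
`φ w ≤ dh_{x + t w}(w)`, and since subgradients are norm bounded near `x`, Banach–Alaoglu supplies
a weak*-cluster point `ψ` of the `dh_{x + t w}`, to which the inequality passes.
-/

section WeakDual

theorem exists_apply_eq_of_continuousLinearMap_weakDual {𝕜 E : Type*} [NontriviallyNormedField 𝕜]
    [AddCommGroup E] [Module 𝕜 E] [TopologicalSpace E] (f : WeakDual 𝕜 E →L[𝕜] 𝕜) :
    ∃ v : E, ∀ ψ : WeakDual 𝕜 E, f ψ = ψ v := by
  obtain ⟨v, hv⟩ := LinearMap.dualEmbedding_surjective (topDualPairing 𝕜 E) f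
  exact ⟨v, fun ψ => (DFunLike.congr_fun hv ψ).symm⟩

theorem mem_closure_convexHull_of_forall_exists_apply_le {E : Type*} [AddCommGroup E] [Module ℝ E]
    [TopologicalSpace E] [IsTopologicalAddGroup E] {s : Set (WeakDual ℝ E)} {φ : WeakDual ℝ E}
    (hφ : ∀ v, ∃ ψ ∈ s, φ v ≤ ψ v) : φ ∈ closure (convexHull ℝ s) := by
  by_contra hmem
  have : LocallyConvexSpace ℝ (WeakDual ℝ E) :=
    inferInstanceAs (LocallyConvexSpace ℝ (WeakBilin (topDualPairing ℝ E)))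
  obtain ⟨f, u, hfu, huf⟩ := geometric_hahn_banach_closed_point
    (convex_convexHull ℝ s).closure isClosed_closure hmem
  obtain ⟨v, hv⟩ := exists_apply_eq_of_continuousLinearMap_weakDual f
  obtain ⟨ψ, hψ, hle⟩ := hφ v
  have hlt : ψ v < φ v := by
    simpa only [hv] using (hfu ψ (subset_closure (subset_convexHull ℝ s hψ))).trans huf
  exact hle.not_gt hlt

theorem tendsto_weakDual_apply {𝕜 E ι : Type*} [NontriviallyNormedField 𝕜]
    [SeminormedAddCommGroup E] [NormedSpace 𝕜 E] {l : Filter ι} {ψ : ι → WeakDual 𝕜 E}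
    {φ : WeakDual 𝕜 E} {w : ι → E} {v : E} {C : ℝ} (hψ : Tendsto ψ l (𝓝 φ))
    (hw : Tendsto w l (𝓝 v)) (hC : ∀ᶠ i in l, ‖WeakDual.toStrongDual (ψ i)‖ ≤ C) :
    Tendsto (fun i => ψ i (w i)) l (𝓝 (φ v)) := by
  have hfixed : Tendsto (fun i => ψ i v) l (𝓝 (φ v)) :=
    ((WeakDual.eval_continuous v).tendsto φ).comp hψ
  have herror : Tendsto (fun i => ψ i (w i - v)) l (𝓝 0) := by
    have hdist : Tendsto (fun i => C * ‖w i - v‖) l (𝓝 0) := by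
      simpa using (tendsto_iff_norm_sub_tendsto_zero.1 hw).const_mul C
    exact squeeze_zero_norm' (hC.mono fun i hi =>
      (WeakDual.toStrongDual (ψ i)).le_of_opNorm_le hi (w i - v)) hdist
  simpa using hfixed.add herror

theorem exists_ultrafilter_tendsto_of_norm_le {𝕜 E ι : Type*} [NontriviallyNormedField 𝕜]
    [ProperSpace 𝕜] [SeminormedAddCommGroup E] [NormedSpace 𝕜 E] {l : Filter ι} [l.NeBot]
    {ψ : ι → WeakDual 𝕜 E} {C : ℝ} (hC : ∀ᶠ i in l, ‖WeakDual.toStrongDual (ψ i)‖ ≤ C) :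
    ∃ U : Ultrafilter ι, ↑U ≤ l ∧ ∃ φ, Tendsto ψ U (𝓝 φ) := by
  have hball : ∀ᶠ i in (Ultrafilter.of l : Filter ι),
      ψ i ∈ WeakDual.toStrongDual ⁻¹' Metric.closedBall (0 : StrongDual 𝕜 E) C :=
    (hC.filter_mono (Ultrafilter.of_le l)).mono fun i hi => mem_closedBall_zero_iff.2 hi
  obtain ⟨φ, -, hφ⟩ := (WeakDual.isCompact_closedBall (0 : StrongDual 𝕜 E) C).ultrafilter_le_nhds
    ((Ultrafilter.of l).map ψ) (le_principal_iff.2 hball)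
  exact ⟨Ultrafilter.of l, Ultrafilter.of_le l, φ, hφ⟩

end WeakDual

theorem frequently_add_smul_mem_of_dense {E : Type*} [AddCommGroup E] [Module ℝ E]
    [TopologicalSpace E] [ContinuousAdd E] [ContinuousConstSMul ℝ E] {s : Set E} (hs : Dense s)
    (x v : E) : ∃ᶠ p : ℝ × E in 𝓝[>] 0 ×ˢ 𝓝 v, x + p.1 • p.2 ∈ s := by
  refine Frequently.of_curry (Eventually.frequently ?_)
  filter_upwards [self_mem_nhdsWithin] with t (ht : 0 < t)
  have hopen : IsOpenMap fun w : E => x + t • w :=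
    (isOpenMap_add_left x).comp (isOpenMap_smul₀ ht.ne')
  exact mem_closure_iff_frequently.1 (hs.preimage hopen v)

section Subdifferential

variable {X : Type*} [NormedAddCommGroup X] [NormedSpace ℝ X] {h : X → ℝ} {x y : X}
  {φ ψ : WeakDual ℝ X}

namespace IsFenchelSubgradient

theorem apply_sub_le (hφ : IsFenchelSubgradient h x φ) (y : X) : φ (y - x) ≤ h y - h x := by
  simpa [le_sub_iff_add_le'] using hφ (y - x)

theorem apply_sub_le_apply_sub (hφ : IsFenchelSubgradient h x φ)
    (hψ : IsFenchelSubgradient h y ψ) : φ (y - x) ≤ ψ (y - x) := by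
  have hψ' := hψ.apply_sub_le x
  rw [← neg_sub y x, map_neg] at hψ'
  linarith [hφ.apply_sub_le y]

theorem apply_le_apply_of_add_smul {t : ℝ} {w : X} (hφ : IsFenchelSubgradient h x φ)
    (ht : 0 < t) (hψ : IsFenchelSubgradient h (x + t • w) ψ) : φ w ≤ ψ w := by
  have hmono := hφ.apply_sub_le_apply_sub hψ
  simp only [add_sub_cancel_left, map_smul, smul_eq_mul] at hmono
  exact le_of_mul_le_mul_left hmono ht

theorem norm_toStrongDual_le (hφ : IsFenchelSubgradient h x φ) {r M : ℝ} (hr : 0 < r)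
    (hM : ∀ w ∈ Metric.closedBall (0 : X) r, h (x + w) ≤ h x + M) :
    ‖WeakDual.toStrongDual φ‖ ≤ M / r := by
  have happly : ∀ w ∈ Metric.closedBall (0 : X) r, φ w ≤ M := fun w hw => by
    linarith [hφ w, hM w hw]
  refine ContinuousLinearMap.opNorm_bound_of_ball_bound hr M _ fun w hw => abs_le'.2 ⟨?_, ?_⟩
  · exact happly w hw
  · rw [← map_neg]
    exact happly (-w) (by simpa using hw)

theorem of_tendsto {ι : Type*} {l : Filter ι} [l.NeBot] {z : ι → X} {χ : ι → WeakDual ℝ X}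
    (hh : Continuous h) (hχ : ∀ᶠ i in l, IsFenchelSubgradient h (z i) (χ i))
    (hz : Tendsto z l (𝓝 x)) (hlim : Tendsto χ l (𝓝 φ)) : IsFenchelSubgradient h x φ := by
  intro v
  have hleft : Tendsto (fun i => h (z i) + χ i v) l (𝓝 (h x + φ v)) :=
    ((hh.tendsto x).comp hz).add (((WeakDual.eval_continuous v).tendsto φ).comp hlim)
  have hright : Tendsto (fun i => h (z i + v)) l (𝓝 (h (x + v))) :=
    (hh.tendsto (x + v)).comp (hz.add_const v)
  exact le_of_tendsto_of_tendsto hleft hright (hχ.mono fun i hi => hi v)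

end IsFenchelSubgradient

theorem isClosed_setOf_isFenchelSubgradient (h : X → ℝ) (x : X) :
    IsClosed {φ : WeakDual ℝ X | IsFenchelSubgradient h x φ} := by
  simp only [IsFenchelSubgradient, Set.ofPred_forall]
  exact isClosed_iInter fun v =>
    isClosed_le (continuous_const.add (WeakDual.eval_continuous v)) continuous_const

theorem convex_setOf_isFenchelSubgradient (h : X → ℝ) (x : X) :
    Convex ℝ {φ : WeakDual ℝ X | IsFenchelSubgradient h x φ} := by
  intro φ hφ ψ hψ a b ha hb hab v
  calc h x + (a • φ + b • ψ) v = (a + b) * h x + (a * φ v + b * ψ v) := by rw [hab, one_mul]; rfl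
    _ = a * (h x + φ v) + b * (h x + ψ v) := by ring
    _ ≤ a * h (x + v) + b * h (x + v) := by gcongr; exacts [hφ v, hψ v]
    _ = h (x + v) := by rw [← add_mul, hab, one_mul]

theorem exists_eventually_norm_fenchelSubgradient_le (hh : ContinuousAt h x) :
    ∃ C : ℝ, ∀ᶠ y in 𝓝 x, ∀ ψ, IsFenchelSubgradient h y ψ → ‖WeakDual.toStrongDual ψ‖ ≤ C := by
  have hincrement : Tendsto (fun p : X × X => h (p.1 + p.2) - h p.1) (𝓝 x ×ˢ 𝓝 0) (𝓝 0) := by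
    have hadd : Tendsto (fun p : X × X => p.1 + p.2) (𝓝 x ×ˢ 𝓝 0) (𝓝 x) := by
      simpa using (tendsto_fst (f := 𝓝 x) (g := 𝓝 0)).add tendsto_snd
    simpa using (hh.tendsto.comp hadd).sub (hh.tendsto.comp tendsto_fst)
  obtain ⟨P, hP, Q, hQ, hPQ⟩ := eventually_prod_iff.1 (hincrement.eventually_le_const one_pos)
  obtain ⟨r, hr, hrQ⟩ := Metric.nhds_basis_closedBall.eventually_iff.1 hQ
  refine ⟨1 / r, hP.mono fun y hy ψ hψ => hψ.norm_toStrongDual_le hr fun w hw => ?_⟩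
  linarith [hPQ hy (hrQ hw)]

theorem limitSubgradients_subset_setOf_isFenchelSubgradient (hh : Continuous h) (x : X) :
    limitSubgradients h x ⊆ {φ | IsFenchelSubgradient h x φ} := by
  rintro φ ⟨F, _, hF, hfst, hsnd⟩
  exact .of_tendsto hh (hF.mono fun p hp => hp.2) hfst hsnd

theorem mem_limitSubgradients_of_tendsto {ι : Type*} {l : Filter ι} [l.NeBot] {z : ι → X}
    {χ : ι → WeakDual ℝ X} (hunique : ∀ᶠ i in l, ∃! ψ, IsFenchelSubgradient h (z i) ψ)
    (hχ : ∀ᶠ i in l, IsFenchelSubgradient h (z i) (χ i)) (hz : Tendsto z l (𝓝 x))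
    (hlim : Tendsto χ l (𝓝 φ)) : φ ∈ limitSubgradients h x :=
  ⟨l.map fun i => (z i, χ i), inferInstance, eventually_map.2 (hunique.and hχ),
    tendsto_map'_iff.2 hz, tendsto_map'_iff.2 hlim⟩

theorem IsFenchelSubgradient.exists_mem_limitSubgradients_apply_le
    (hφ : IsFenchelSubgradient h x φ) (hh : ContinuousAt h x)
    (hdense : Dense {y : X | ∃! ψ : WeakDual ℝ X, IsFenchelSubgradient h y ψ}) (v : X) :
    ∃ ψ ∈ limitSubgradients h x, φ v ≤ ψ v := by
  obtain ⟨p, hp, hunique⟩ :=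
    exists_seq_forall_of_frequently (frequently_add_smul_mem_of_dense hdense x v)
  obtain ⟨ht, hw⟩ := tendsto_prod_iff'.1 hp
  obtain ⟨ht, htpos⟩ := tendsto_nhdsWithin_iff.1 ht
  have hz : Tendsto (fun n => x + (p n).1 • (p n).2) atTop (𝓝 x) := by
    simpa using (ht.smul hw).const_add x
  choose χ hχ using fun n => (hunique n).exists
  obtain ⟨C, hC⟩ := exists_eventually_norm_fenchelSubgradient_le hh
  have hbound : ∀ᶠ n in atTop, ‖WeakDual.toStrongDual (χ n)‖ ≤ C :=
    (hz.eventually hC).mono fun n hn => hn (χ n) (hχ n)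
  obtain ⟨U, hU, ψ, hψ⟩ := exists_ultrafilter_tendsto_of_norm_le hbound
  refine ⟨ψ, mem_limitSubgradients_of_tendsto (.of_forall hunique) (.of_forall hχ)
    (hz.mono_left hU) hψ, ?_⟩
  have hφw : Tendsto (fun n => φ (p n).2) U (𝓝 (φ v)) :=
    ((map_continuous φ).tendsto v).comp (hw.mono_left hU)
  have hχw : Tendsto (fun n => χ n (p n).2) U (𝓝 (ψ v)) :=
    tendsto_weakDual_apply hψ (hw.mono_left hU) (hbound.filter_mono hU)
  exact le_of_tendsto_of_tendsto hφw hχw <| (htpos.filter_mono hU).mono fun n hn =>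
    hφ.apply_le_apply_of_add_smul hn (hχ n)

end Subdifferential

theorem lanford_robinson_general {X : Type*} [NormedAddCommGroup X] [NormedSpace ℝ X]
    {h : X → ℝ} (hh : Continuous h)
    (hdense : Dense {y : X | ∃! ψ : WeakDual ℝ X, IsFenchelSubgradient h y ψ}) (x : X) :
    {φ : WeakDual ℝ X | IsFenchelSubgradient h x φ} =
      closure (convexHull ℝ (limitSubgradients h x)) := by
  apply Set.Subset.antisymm
  · intro φ hφ
    exact mem_closure_convexHull_of_forall_exists_apply_le
      (hφ.exists_mem_limitSubgradients_apply_le hh.continuousAt hdense)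
  · exact closure_minimal
      (convexHull_min (limitSubgradients_subset_setOf_isFenchelSubgradient hh x)
        (convex_setOf_isFenchelSubgradient h x))
      (isClosed_setOf_isFenchelSubgradient h x)

theorem lanford_robinson {X : Type*} [NormedAddCommGroup X] [NormedSpace ℝ X]
    [CompleteSpace X] [TopologicalSpace.SeparableSpace X]
    (h : X → ℝ) (hconv : ConvexOn ℝ Set.univ h) (L : NNReal) (hLip : LipschitzWith L h)
    (hdense : Dense {x : X | ∃! φ : WeakDual ℝ X, IsFenchelSubgradient h x φ})
    (x : X) :
    {φ : WeakDual ℝ X | IsFenchelSubgradient h x φ} =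
      closure (convexHull ℝ (limitSubgradients h x)) :=
  lanford_robinson_general hLip.continuous hdense x
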